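/- arXiv:2403.09337 — 3 statements merged into one kernel-verified Lean document; each statement's English description precedes it below -/
import Mathlib

section
/- Let L be a finite-dimensional semisimple Lie algebra over the complex numbers, U(L) its universal enveloping algebra, and Z(U(L)) the center of U(L). Let I be a two-sided ideal of U(L) with I ≠ U(L) such that the quotient U(L)/I is finite-dimensional over ℂ and I ∩ Z(U(L)) is a maximal ideal of the commutative ring Z(U(L)). Then I is a maximal two-sided ideal of U(L). -/
/-!
Let `U` be the enveloping algebra of `L` and `Z` its centre. Weyl's theorem on complete
reducibility, obtained here from the Fitting decomposition of a Casimir operator, makes the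
finite-dimensional algebra `U ⧸ I` a semisimple ring, so each of its two-sided ideals is generated
by a central idempotent. Central elements are the invariants of the adjoint action of `L`, which on
`U` is locally finite; taking invariants preserves surjectivity of maps out of locally finite
modules, so every central element of `U ⧸ I` lifts to `Z`. A central idempotent of `U ⧸ I`
therefore comes from `Z ⧸ (I ∩ Z)`, which is a domain, so it is `0` or `1`.
-/

open LieAlgebra LieModule Module

section Perfect

variable {R L M : Type*} [CommRing R] [LieRing L] [LieAlgebra R L]
  [AddCommGroup M] [Module R M] [LieRingModule L M] [LieModule R L M]

theorem lie_top_top_eq_top_of_isSemisimple [IsSemisimple R L] :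
    ⁅(⊤ : LieIdeal R L), (⊤ : LieIdeal R L)⁆ = ⊤ := by
  refine eq_top_iff.2 (IsSemisimple.sSup_atoms_eq_top.ge.trans (sSup_le fun I hI ↦ ?_))
  rw [← lie_eq_self_of_isAtom_of_nonabelian I hI (IsSemisimple.non_abelian_of_isAtom I hI)]
  exact LieSubmodule.mono_lie le_top le_top

theorem lie_lie_le_sup (I J : LieIdeal R L) (N : LieSubmodule R L M) :
    ⁅⁅I, J⁆, N⁆ ≤ ⁅I, ⁅J, N⁆⁆ ⊔ ⁅J, ⁅I, N⁆⁆ := by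
  refine (LieSubmodule.lie_le_iff _ _ _).2 fun x hx m hm ↦ ?_
  rw [← LieSubmodule.mem_toSubmodule, LieSubmodule.lieIdeal_oper_eq_linear_span'] at hx
  induction hx using Submodule.span_induction with
  | mem x hx =>
    obtain ⟨y, hy, z, hz, rfl⟩ := hx
    rw [lie_lie]
    exact sub_mem
      (LieSubmodule.mem_sup_left (LieSubmodule.lie_mem_lie hy (LieSubmodule.lie_mem_lie hz hm)))
      (LieSubmodule.mem_sup_right (LieSubmodule.lie_mem_lie hz (LieSubmodule.lie_mem_lie hy hm)))
  | zero => rw [zero_lie]; exact zero_mem _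
  | add x y _ _ hx hy => rw [add_lie]; exact add_mem hx hy
  | smul c x _ hx => rw [smul_lie]; exact SMulMemClass.smul_mem c hx

theorem isTrivial_of_isNilpotent_of_lie_top_top_eq_top [LieModule.IsNilpotent L M]
    (hL : ⁅(⊤ : LieIdeal R L), (⊤ : LieIdeal R L)⁆ = ⊤) : LieModule.IsTrivial L M := by
  have hstep (N : LieSubmodule R L M) :
      ⁅(⊤ : LieIdeal R L), N⁆ ≤ ⁅(⊤ : LieIdeal R L), ⁅(⊤ : LieIdeal R L), N⁆⁆ := by
    simpa only [hL, sup_idem] using lie_lie_le_sup (⊤ : LieIdeal R L) ⊤ N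
  have hlcs (k : ℕ) : lowerCentralSeries R L M 1 ≤ lowerCentralSeries R L M (k + 1) := by
    induction k with
    | zero => exact le_rfl
    | succ k ih =>
      calc lowerCentralSeries R L M 1
          ≤ ⁅(⊤ : LieIdeal R L), lowerCentralSeries R L M 1⁆ := hstep ⊤
        _ ≤ ⁅(⊤ : LieIdeal R L), lowerCentralSeries R L M (k + 1)⁆ :=
            LieSubmodule.mono_lie_right ⊤ ih
        _ = lowerCentralSeries R L M (k + 1 + 1) := (lowerCentralSeries_succ R L M _).symm
  obtain ⟨k, hk⟩ := (LieModule.isNilpotent_iff R L M).1 inferInstance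
  rw [trivial_iff_lower_central_eq_bot R, eq_bot_iff, ← hk]
  exact (hlcs k).trans (antitone_lowerCentralSeries R L M k.le_succ)

theorem le_lie_top_sup_maxTrivSubmodule_of_eq_top {N : LieSubmodule R L M}
    (hN : ⁅(⊤ : LieIdeal R L), (⊤ : LieSubmodule R L N)⁆ ⊔ maxTrivSubmodule R L N = ⊤) :
    N ≤ ⁅(⊤ : LieIdeal R L), N⁆ ⊔ maxTrivSubmodule R L M := by
  have htriv : (maxTrivSubmodule R L N).map N.incl ≤ maxTrivSubmodule R L M := by
    rintro _ ⟨m, hm, rfl⟩ x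
    exact congrArg Subtype.val (hm x)
  have hmap : (⊤ : LieSubmodule R L N).map N.incl = N := by simp
  calc N = ⁅(⊤ : LieIdeal R L), N⁆ ⊔ (maxTrivSubmodule R L N).map N.incl := by
        conv_lhs => rw [← hmap, ← hN, LieSubmodule.map_sup, LieSubmodule.map_bracket_eq, hmap]
    _ ≤ _ := sup_le_sup le_rfl htriv

end Perfect

section LocallyFinite

/-- A Lie module is locally finite if every element lies in a finitely generated Lie submodule, as
for the adjoint action of `L` on its enveloping algebra. -/
def IsLocallyFiniteLieModule (R L M : Type*) [CommRing R] [LieRing L] [AddCommGroup M]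
    [Module R M] [LieRingModule L M] : Prop :=
  ∀ m : M, ∃ N : LieSubmodule R L M, Module.Finite R N ∧ m ∈ N

variable {R L A M : Type*} [CommRing R] [LieRing L]

theorem isLocallyFiniteLieModule_of_finite [AddCommGroup M] [Module R M] [LieRingModule L M]
    [Module.Finite R M] : IsLocallyFiniteLieModule R L M :=
  fun m ↦ ⟨⊤, inferInstanceAs (Module.Finite R (⊤ : Submodule R M)), LieSubmodule.mem_top m⟩

theorem lie_mem_mul_of_lie_mul [Ring A] [Algebra R A] [LieRingModule L A]
    (hder : ∀ (x : L) (a b : A), ⁅x, a * b⁆ = ⁅x, a⁆ * b + a * ⁅x, b⁆)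
    {P Q : LieSubmodule R L A} (x : L) {c : A} (hc : c ∈ P.toSubmodule * Q.toSubmodule) :
    ⁅x, c⁆ ∈ P.toSubmodule * Q.toSubmodule := by
  induction hc using Submodule.mul_induction_on' with
  | mem_mul_mem p hp q hq =>
    rw [hder]
    exact add_mem (Submodule.mul_mem_mul (P.lie_mem hp) hq)
      (Submodule.mul_mem_mul hp (Q.lie_mem hq))
  | add c _ d _ hc hd => rw [lie_add]; exact add_mem hc hd

theorem isLocallyFiniteLieModule_of_adjoin_eq_top [Ring A] [Algebra R A] [LieRingModule L A]
    [LieAlgebra R L] [LieModule R L A]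
    (hder : ∀ (x : L) (a b : A), ⁅x, a * b⁆ = ⁅x, a⁆ * b + a * ⁅x, b⁆)
    (N : LieSubmodule R L A) [Module.Finite R N] (hN : Algebra.adjoin R (N : Set A) = ⊤) :
    IsLocallyFiniteLieModule R L A := by
  intro a
  have ha : a ∈ Algebra.adjoin R (N : Set A) := hN ▸ Algebra.mem_top
  induction ha using Algebra.adjoin_induction with
  | mem a ha => exact ⟨N, inferInstance, ha⟩
  | algebraMap c =>
    have hone (x : L) : ⁅x, (1 : A)⁆ = 0 := by simpa using hder x 1 1
    have hspan (x : L) {b : A} (hb : b ∈ R ∙ (1 : A)) : ⁅x, b⁆ ∈ R ∙ (1 : A) := by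
      obtain ⟨r, rfl⟩ := Submodule.mem_span_singleton.1 hb
      simp [hone]
    exact ⟨{ R ∙ (1 : A) with lie_mem := hspan _ }, inferInstanceAs (Module.Finite R (R ∙ (1 : A))),
      Submodule.mem_span_singleton.2 ⟨c, (Algebra.algebraMap_eq_smul_one c).symm⟩⟩
  | add a b _ _ iha ihb =>
    obtain ⟨P, hP, haP⟩ := iha
    obtain ⟨Q, hQ, hbQ⟩ := ihb
    have : Module.Finite R ↥(P ⊔ Q) := by
      have := Submodule.finite_sup P.toSubmodule Q.toSubmodule
      rwa [← LieSubmodule.sup_toSubmodule] at this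
    exact ⟨P ⊔ Q, this,
      add_mem (LieSubmodule.mem_sup_left haP) (LieSubmodule.mem_sup_right hbQ)⟩
  | mul a b _ _ iha ihb =>
    obtain ⟨P, hP, haP⟩ := iha
    obtain ⟨Q, hQ, hbQ⟩ := ihb
    exact ⟨{ P.toSubmodule * Q.toSubmodule with lie_mem := lie_mem_mul_of_lie_mul hder _ },
      Module.Finite.iff_fg.2 ((Module.Finite.iff_fg.1 hP).mul (Module.Finite.iff_fg.1 hQ)),
      Submodule.mul_mem_mul haP hbQ⟩

end LocallyFinite

section Casimir

variable {K L : Type*} [Field K] [LieRing L]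

theorem sum_apply_smul_dualBasis {ι V : Type*} [AddCommGroup V] [Module K V] [Fintype ι]
    [DecidableEq ι] (B : LinearMap.BilinForm K V) (hB : B.Nondegenerate) (b : Basis ι K V)
    (x : V) : ∑ i, B x (b i) • B.dualBasis hB b i = x := by
  simpa only [LinearMap.BilinForm.dualBasis_repr_apply] using (B.dualBasis hB b).sum_repr x

theorem sum_dualBasis_apply_smul {ι V : Type*} [AddCommGroup V] [Module K V] [Fintype ι]
    [DecidableEq ι] (B : LinearMap.BilinForm K V) (hB : B.Nondegenerate) (b : Basis ι K V)
    (x : V) : ∑ i, B (B.dualBasis hB b i) x • b i = x := by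
  have := Module.Finite.of_basis b
  simpa only [LinearMap.BilinForm.dualBasis_flip_dualBasis, LinearMap.BilinForm.flip_apply]
    using! sum_apply_smul_dualBasis B.flip hB.flip (B.dualBasis hB b) x

theorem lie_sum_dualBasis_eq_zero {ι V P : Type*} [AddCommGroup V] [Module K V] [Fintype ι]
    [DecidableEq ι] [LieRingModule L V]
    [AddCommGroup P] [Module K P] [LieRingModule L P]
    (B : LinearMap.BilinForm K V) (hB : B.Nondegenerate) (hinv : B.lieInvariant L)
    (b : Basis ι K V) (β : V →ₗ[K] V →ₗ[K] P)
    (hβ : ∀ (z : L) (x y : V), ⁅z, β x y⁆ = β ⁅z, x⁆ y + β x ⁅z, y⁆) (z : L) :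
    ⁅z, ∑ i, β (b i) (B.dualBasis hB b i)⁆ = 0 := by
  set f := B.dualBasis hB b
  have hb (i : ι) : ⁅z, b i⁆ = ∑ j, B (f j) ⁅z, b i⁆ • b j :=
    (sum_dualBasis_apply_smul B hB b _).symm
  have hf (i : ι) : ⁅z, f i⁆ = -∑ j, B (f i) ⁅z, b j⁆ • f j := by
    rw [← sum_apply_smul_dualBasis B hB b ⁅z, f i⁆, ← Finset.sum_neg_distrib]
    exact Finset.sum_congr rfl fun j _ ↦ by rw [hinv, neg_smul]
  calc ⁅z, ∑ i, β (b i) (f i)⁆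
      = ∑ i, β ⁅z, b i⁆ (f i) + ∑ i, β (b i) ⁅z, f i⁆ := by
        simp_rw [lie_sum, hβ, Finset.sum_add_distrib]
    _ = ∑ i, ∑ j, B (f j) ⁅z, b i⁆ • β (b j) (f i)
        - ∑ i, ∑ j, B (f i) ⁅z, b j⁆ • β (b i) (f j) := by
        rw [sub_eq_add_neg, ← Finset.sum_neg_distrib]
        congr 1 <;> refine Finset.sum_congr rfl fun i _ ↦ ?_
        · conv_lhs => rw [hb i]
          simp only [map_sum, map_smul, LinearMap.sum_apply, LinearMap.smul_apply]
        · simp only [hf i, map_neg, map_sum, map_smul]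
    _ = 0 := by rw [Finset.sum_comm, sub_self]

variable [LieAlgebra K L] (J : LieIdeal K L) [FiniteDimensional K J] (M : Type*) [AddCommGroup M]
  [Module K M] [LieRingModule L M] [LieModule K L M] (B : LinearMap.BilinForm K J)

/-- The Casimir operator on `M` of a nondegenerate bilinear form `B` on a Lie ideal `J`: the sum of
`bᵢ bⁱ` over a basis `bᵢ` of `J` and its `B`-dual basis `bⁱ`. It does not depend on the basis, so an
arbitrary one is chosen. -/
noncomputable def casimir (hB : B.Nondegenerate) : End K M :=
  ∑ i, toEnd K J M (finBasis K J i) * toEnd K J M (B.dualBasis hB (finBasis K J) i)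

theorem commute_casimir_toEnd (hB : B.Nondegenerate) (hinv : B.lieInvariant L) (z : L) :
    Commute (casimir J M B hB) (toEnd K L M z) := by
  let β : J →ₗ[K] J →ₗ[K] End K M :=
    (LinearMap.mul K (End K M)).compl₁₂ (toEnd K J M) (toEnd K J M)
  have hβ (z : L) (x y : J) : ⁅z, β x y⁆ = β ⁅z, x⁆ y + β x ⁅z, y⁆ := by
    ext m
    simp [β, LieHom.lie_apply]
  have h := lie_sum_dualBasis_eq_zero B hB hinv (finBasis K J) β hβ z
  refine LinearMap.ext fun m ↦ ?_
  exact (sub_eq_zero.1 (LinearMap.congr_fun h m)).symm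

theorem range_casimir_le (hB : B.Nondegenerate) :
    LinearMap.range (casimir J M B hB) ≤ ⁅(⊤ : LieIdeal K L), (⊤ : LieSubmodule K L M)⁆ := by
  rintro _ ⟨m, rfl⟩
  simp only [casimir, LinearMap.sum_apply, Module.End.mul_apply]
  exact sum_mem fun i _ ↦ LieSubmodule.lie_mem_lie trivial trivial

theorem trace_casimir_traceForm (hB : (traceForm K J M).Nondegenerate) :
    LinearMap.trace K M (casimir J M _ hB) = finrank K J := by
  have hdiag (i) : LinearMap.trace K M (toEnd K J M (finBasis K J i) *
      toEnd K J M (LinearMap.BilinForm.dualBasis _ hB (finBasis K J) i)) = 1 :=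
    (LinearMap.BilinForm.apply_dualBasis_right hB ⟨(traceForm_isSymm K J M).eq⟩ _ i i).trans
      (if_pos rfl)
  simp [casimir, map_sum, hdiag]

end Casimir

section Decomposition

theorem isTrivial_of_traceForm_eq_zero {K L M : Type*} [Field K] [CharZero K] [LieRing L]
    [LieAlgebra K L] [IsSemisimple K L] [AddCommGroup M] [Module K M] [LieRingModule L M]
    [LieModule K L M] [FiniteDimensional K M] (h : traceForm K L M = 0) :
    LieModule.IsTrivial L M := by
  have hL := lie_top_top_eq_top_of_isSemisimple (R := K) (L := L)
  have hnil := isNilpotent_derivedSeries_of_traceForm_eq_zero h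
  have : LieModule.IsNilpotent L M := by
    rw [LieModule.isNilpotent_iff_forall' (R := K)] at hnil ⊢
    exact fun x ↦ hnil ⟨x, hL.ge trivial⟩
  exact isTrivial_of_isNilpotent_of_lie_top_top_eq_top hL

variable {K L : Type*} [Field K] [CharZero K] [LieRing L] [LieAlgebra K L] [FiniteDimensional K L]
  [IsSemisimple K L] {M : Type*} [AddCommGroup M] [Module K M] [LieRingModule L M] [LieModule K L M]

theorem exists_commute_toEnd_trace_ne_zero (h : traceForm K L M ≠ 0) :
    ∃ C : End K M, (∀ x, Commute C (toEnd K L M x)) ∧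
      LinearMap.range C ≤ ⁅(⊤ : LieIdeal K L), (⊤ : LieSubmodule K L M)⁆ ∧
      LinearMap.trace K M C ≠ 0 := by
  let R : LieIdeal K L :=
    { LinearMap.ker (traceForm K L M) with
      lie_mem := fun {x y} hy ↦ by
        refine LinearMap.ext fun z ↦ ?_
        rw [traceForm_lieInvariant K L M x y z]
        exact neg_eq_zero.2 (LinearMap.congr_fun hy _) }
  obtain ⟨J, hJ⟩ := exists_isCompl R
  have hB : (traceForm K J M).Nondegenerate :=
    LinearMap.IsSymm.nondegenerate_restrict_of_isCompl_ker (traceForm_isSymm K L M)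
      (LieSubmodule.isCompl_toSubmodule.2 hJ.symm)
  have hinv : (traceForm K J M).lieInvariant L :=
    fun x y z ↦ traceForm_lieInvariant K L M x y z
  refine ⟨casimir J M _ hB, commute_casimir_toEnd J M _ hB hinv, range_casimir_le J M _ hB, ?_⟩
  rw [trace_casimir_traceForm, Nat.cast_ne_zero]
  intro hJ0
  have hJbot : J = ⊥ := (LieSubmodule.toSubmodule_eq_bot J).1 (Submodule.finrank_eq_zero.1 hJ0)
  have hR : R = ⊤ := by simpa [hJbot] using hJ.sup_eq_top
  exact h (LinearMap.ext fun x ↦ hR.ge (LieSubmodule.mem_top x))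

theorem lie_top_sup_maxTrivSubmodule_eq_top [FiniteDimensional K M] :
    ⁅(⊤ : LieIdeal K L), (⊤ : LieSubmodule K L M)⁆ ⊔ maxTrivSubmodule K L M = ⊤ := by
  induction hn : finrank K M using Nat.strong_induction_on generalizing M with
  | _ n ih =>
  by_cases ht : traceForm K L M = 0
  · have := isTrivial_of_traceForm_eq_zero ht
    rw [(isTrivial_iff_max_triv_eq_top K L M).1 this, sup_top_eq]
  obtain ⟨C, hcomm, hrange, htr⟩ := exists_commute_toEnd_trace_ne_zero ht
  obtain ⟨k, hk, hcompl⟩ := ((Filter.eventually_ge_atTop 1).and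
    (LinearMap.eventually_isCompl_ker_pow_range_pow C)).exists
  let N : LieSubmodule K L M :=
    { LinearMap.ker (C ^ k) with
      lie_mem := fun {x m} hm ↦ by
        have := LinearMap.congr_fun ((hcomm x).pow_left k) m
        simpa [show (C ^ k) m = 0 from hm] using this }
  have hN : N.toSubmodule ≠ ⊤ := fun h ↦ htr <| IsNilpotent.eq_zero <|
    LinearMap.isNilpotent_trace_of_isNilpotent ⟨k, LinearMap.ker_eq_top.1 h⟩
  have hker := le_lie_top_sup_maxTrivSubmodule_of_eq_top
    (ih _ (hn ▸ Submodule.finrank_lt hN) (M := N) rfl)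
  have hrangek : LinearMap.range (C ^ k) ≤
      (⁅(⊤ : LieIdeal K L), (⊤ : LieSubmodule K L M)⁆).toSubmodule := by
    refine le_trans ?_ hrange
    obtain ⟨j, rfl⟩ := Nat.exists_eq_add_of_le hk
    rw [pow_add, pow_one]
    exact LinearMap.range_comp_le_range _ _
  rw [← LieSubmodule.toSubmodule_inj, LieSubmodule.top_toSubmodule, eq_top_iff, ← hcompl.sup_eq_top]
  exact sup_le (hker.trans (sup_le_sup_right (LieSubmodule.mono_lie_right ⊤ le_top) _))
    fun m hm ↦ LieSubmodule.mem_sup_left (hrangek hm)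

theorem IsLocallyFiniteLieModule.surjective_maxTrivHom {Q : Type*} [AddCommGroup Q] [Module K Q]
    [LieRingModule L Q] [LieModule K L Q] (hM : IsLocallyFiniteLieModule K L M)
    (f : M →ₗ⁅K,L⁆ Q) (hf : Function.Surjective f) : Function.Surjective (maxTrivHom f) := by
  rintro ⟨q, hq⟩
  obtain ⟨m, hmq⟩ := hf q
  obtain ⟨N, hN, hm⟩ := hM m
  let P := N ⊓ (maxTrivSubmodule K L Q).comap f
  have hLP : ⁅(⊤ : LieIdeal K L), P⁆ ≤ f.ker := by
    refine (LieSubmodule.lie_le_iff _ _ _).2 fun x _ p hp ↦ ?_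
    rw [LieModuleHom.mem_ker, LieModuleHom.map_lie]
    exact hp.2 x
  have : FiniteDimensional K P := Submodule.finiteDimensional_of_le (inf_le_left : P ≤ N)
  obtain ⟨y, hy, z, hz, hyz⟩ := (LieSubmodule.mem_sup _ _ _).1 <|
    le_lie_top_sup_maxTrivSubmodule_of_eq_top lie_top_sup_maxTrivSubmodule_eq_top
      (show m ∈ P from ⟨hm, LieSubmodule.mem_comap.2 (hmq ▸ hq)⟩)
  refine ⟨⟨z, hz⟩, Subtype.ext ?_⟩
  calc f z = f y + f z := by rw [(LieModuleHom.mem_ker ..).1 (hLP hy), zero_add]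
    _ = q := by rw [← map_add, hyz, hmq]

theorem exists_lieModuleHom_apply_coe_eq_self [FiniteDimensional K M] (N : LieSubmodule K L M) :
    ∃ p : M →ₗ⁅K,L⁆ N, ∀ n : N, p n = n := by
  let res : (M →ₗ[K] N) →ₗ⁅K,L⁆ (N →ₗ[K] N) :=
    { N.toSubmodule.subtype.lcomp K N with
      map_lie' := fun {x g} ↦ by ext n; simp [LieHom.lie_apply, ← LieSubmodule.coe_bracket] }
  have hres : Function.Surjective res := fun g ↦ LinearMap.exists_extend g
  obtain ⟨p, hp⟩ := isLocallyFiniteLieModule_of_finite.surjective_maxTrivHom res hres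
    (maxTrivLinearMapEquivLieModuleHom.symm LieModuleHom.id)
  exact ⟨maxTrivLinearMapEquivLieModuleHom p, LinearMap.congr_fun (congrArg Subtype.val hp)⟩

theorem complementedLattice_lieSubmodule [FiniteDimensional K M] :
    ComplementedLattice (LieSubmodule K L M) := by
  refine ⟨fun N ↦ ?_⟩
  obtain ⟨p, hp⟩ := exists_lieModuleHom_apply_coe_eq_self N
  exact ⟨p.ker, LieSubmodule.isCompl_toSubmodule.1 (LinearMap.isCompl_of_proj hp)⟩

end Decomposition

section IdempotentIdeals

theorem exists_isIdempotentElem_mem_center_eq_span {R : Type*} [Ring R] [IsSemisimpleRing R]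
    (I : Ideal R) [I.IsTwoSided] : ∃ e ∈ Set.center R, IsIdempotentElem e ∧ I = Ideal.span {e} := by
  obtain ⟨e, he, rfl⟩ := IsSemisimpleRing.ideal_eq_span_idempotent I
  set I := Ideal.span {e}
  have heI : e ∈ I := Ideal.mem_span_singleton_self e
  have hmul {y : R} (hy : y ∈ I) : y * e = y := by
    obtain ⟨a, rfl⟩ := Ideal.mem_span_singleton'.1 hy
    rw [mul_assoc, he.eq]
  suffices h : ∀ a, a * e - e * (a * e) = 0 from
    ⟨e, Semigroup.mem_center_iff.2 fun a ↦ by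
      rw [sub_eq_zero.1 (h a), ← mul_assoc, hmul (I.mul_mem_right a heI)], he, rfl⟩
  intro a
  set x := a * e - e * (a * e)
  have hxI : x ∈ I := I.sub_mem (I.mul_mem_left _ heI) (I.mul_mem_left _ (I.mul_mem_left _ heI))
  have hex : e * x = 0 := by rw [mul_sub, ← mul_assoc e e, he.eq, sub_self]
  have hIx {y : R} (hy : y ∈ I) : y * x = 0 := by rw [← hmul hy, mul_assoc, hex, mul_zero]
  -- The left ideal generated by `x` squares to zero, so its idempotent generator vanishes.
  obtain ⟨g, hg, hspan⟩ := IsSemisimpleRing.ideal_eq_span_idempotent (Ideal.span {x})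
  obtain ⟨r, hr⟩ := Ideal.mem_span_singleton'.1 (hspan ▸ Ideal.mem_span_singleton_self g)
  have hg0 : g = 0 := by
    have hgI : g ∈ I := hr ▸ I.mul_mem_left r hxI
    rw [← hg.eq, ← hr, ← mul_assoc, hr]
    exact hIx (I.mul_mem_right r hgI)
  rwa [hg0, Ideal.span_singleton_zero, Ideal.span_singleton_eq_bot] at hspan

theorem eq_top_of_lt_of_isPrime_comap_center {K A : Type*} [CommRing K] [Ring A] [Algebra K A]
    (I J : Ideal A) [I.IsTwoSided] [J.IsTwoSided] [IsSemisimpleRing (A ⧸ I)]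
    (hcenter : ∀ b ∈ Subalgebra.center K (A ⧸ I), ∃ a ∈ Subalgebra.center K A,
      Ideal.Quotient.mk I a = b)
    (hprime : (I.comap (Subalgebra.center K A).val).IsPrime) (hIJ : I < J) : J = ⊤ := by
  obtain ⟨_, hcen, hidem, hJ⟩ :=
    exists_isIdempotentElem_mem_center_eq_span (J.map (Ideal.Quotient.mk I))
  obtain ⟨z, hz, rfl⟩ := hcenter _ hcen
  have hzI : z ∉ I := by
    intro hzI
    rw [Ideal.Quotient.eq_zero_iff_mem.2 hzI, Ideal.span_singleton_zero] at hJ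
    exact hIJ.not_ge (by simpa [Ideal.mk_ker] using Ideal.map_eq_bot_iff_le_ker _ |>.1 hJ)
  have hprod : z * (1 - z) ∈ I := by
    rw [← Ideal.Quotient.eq_zero_iff_mem, map_mul, map_sub, map_one, hidem.mul_one_sub_self]
  have hone : 1 - z ∈ I :=
    (hprime.mem_or_mem (x := ⟨z, hz⟩) (y := 1 - ⟨z, hz⟩) hprod).resolve_left hzI
  have hzJ : z ∈ J :=
    (Ideal.mem_quotient_iff_mem hIJ.le).1 (hJ ▸ Ideal.mem_span_singleton_self _)
  rw [Ideal.eq_top_iff_one, ← sub_add_cancel 1 z]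
  exact J.add_mem (hIJ.le hone) hzJ

end IdempotentIdeals

section GeneratedAlgebra

attribute [local instance] LieRing.ofAssociativeRing

section CommRing

variable {K A L : Type*} [CommRing K] [Ring A] [Algebra K A] [LieRing L] [LieAlgebra K L]

theorem smul_mem_of_forall_mem_of_adjoin_eq_top {V : Type*} [AddCommGroup V] [Module K V]
    [Module A V] [IsScalarTower K A V] {s : Set A} (hs : Algebra.adjoin K s = ⊤)
    {N : Submodule K V} (hN : ∀ a ∈ s, ∀ v ∈ N, a • v ∈ N) (a : A) {v : V} (hv : v ∈ N) :
    a • v ∈ N := by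
  have ha : a ∈ Algebra.adjoin K s := hs ▸ Algebra.mem_top
  induction ha using Algebra.adjoin_induction generalizing v with
  | mem a ha => exact hN a ha v hv
  | algebraMap c => rw [algebraMap_smul]; exact N.smul_mem c hv
  | add a b _ _ iha ihb => rw [add_smul]; exact N.add_mem (iha hv) (ihb hv)
  | mul a b _ _ iha ihb => rw [mul_smul]; exact iha (ihb hv)

theorem adjoin_range_comp_eq_top {B : Type*} [Ring B] [Algebra K B] {φ : L →ₗ⁅K⁆ A}
    (hφ : Algebra.adjoin K (Set.range φ) = ⊤) {π : A →ₐ[K] B} (hπ : Function.Surjective π) :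
    Algebra.adjoin K (Set.range ((π : A →ₗ⁅K⁆ B).comp φ)) = ⊤ := by
  rw [LieHom.coe_comp, Set.range_comp, AlgHom.coe_toLieHom, ← AlgHom.map_adjoin, hφ,
    Algebra.map_top, AlgHom.range_eq_top]
  exact hπ

theorem mem_center_of_forall_lie_eq_zero {φ : L →ₗ⁅K⁆ A}
    (hφ : Algebra.adjoin K (Set.range φ) = ⊤) {a : A} (ha : ∀ x, ⁅φ x, a⁆ = 0) :
    a ∈ Subalgebra.center K A := by
  have hle : Algebra.adjoin K (Set.range φ) ≤ Subalgebra.centralizer K {a} := by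
    refine Algebra.adjoin_le ?_
    rintro _ ⟨x, rfl⟩
    exact Subalgebra.mem_centralizer_iff K |>.2 fun b hb ↦ by
      rw [Set.mem_singleton_iff.1 hb]
      exact (sub_eq_zero.1 (ha x)).symm
  exact Subalgebra.mem_center_iff.2 fun b ↦
    ((Subalgebra.mem_centralizer_iff K).1 (hle (hφ ▸ Algebra.mem_top : b ∈ _)) a rfl).symm

theorem adjoin_range_ι_eq_top :
    Algebra.adjoin K (Set.range (UniversalEnvelopingAlgebra.ι K (L := L))) = ⊤ := by
  set S := Algebra.adjoin K (Set.range (UniversalEnvelopingAlgebra.ι K (L := L)))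
  let f : L →ₗ⁅K⁆ S :=
    { toFun := fun x ↦ ⟨UniversalEnvelopingAlgebra.ι K x, Algebra.subset_adjoin ⟨x, rfl⟩⟩
      map_add' := fun x y ↦ Subtype.ext (map_add _ x y)
      map_smul' := fun c x ↦ Subtype.ext (map_smul _ c x)
      map_lie' := fun {x y} ↦ Subtype.ext (LieHom.map_lie _ x y) }
  have hid : S.val.comp (UniversalEnvelopingAlgebra.lift K f) = AlgHom.id K _ := by
    refine UniversalEnvelopingAlgebra.hom_ext K (LieHom.ext fun x ↦ ?_)
    exact congrArg Subtype.val (UniversalEnvelopingAlgebra.lift_ι_apply K f x)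
  refine Algebra.eq_top_iff.2 fun u ↦ ?_
  rw [← AlgHom.id_apply (R := K) u, ← hid]
  exact (UniversalEnvelopingAlgebra.lift K f u).2

end CommRing

variable {K L A : Type*} [Field K] [CharZero K] [LieRing L] [LieAlgebra K L]
  [FiniteDimensional K L] [IsSemisimple K L] [Ring A] [Algebra K A]

theorem isSemisimpleModule_of_adjoin_range_eq_top {φ : L →ₗ⁅K⁆ A} {V : Type*}
    [AddCommGroup V] [Module K V] [Module A V] [IsScalarTower K A V] [FiniteDimensional K V]
    (hφ : Algebra.adjoin K (Set.range φ) = ⊤) : IsSemisimpleModule A V := by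
  let : LieRingModule A V := LieRingModule.ofAssociativeModule
  have : LieModule K A V := LieModule.ofAssociativeModule
  let : LieRingModule L V := LieRingModule.compLieHom V φ
  have : LieModule K L V := LieModule.compLieHom V φ
  let e : Submodule A V ≃o LieSubmodule K L V :=
    { toFun := fun N ↦ { N.restrictScalars K with lie_mem := fun {x v} hv ↦ N.smul_mem (φ x) hv }
      invFun := fun N ↦
        { N.toSubmodule with
          smul_mem' := fun a v hv ↦ smul_mem_of_forall_mem_of_adjoin_eq_top hφ (N := N.toSubmodule)
            (by rintro _ ⟨x, rfl⟩ v hv; exact N.lie_mem hv) a hv }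
      left_inv := fun _ ↦ rfl
      right_inv := fun _ ↦ rfl
      map_rel_iff' := Iff.rfl }
  rw [isSemisimpleModule_iff, e.complementedLattice_iff]
  exact complementedLattice_lieSubmodule

theorem exists_mem_center_apply_eq {B : Type*} [Ring B] [Algebra K B] {φ : L →ₗ⁅K⁆ A}
    (hφ : Algebra.adjoin K (Set.range φ) = ⊤) {π : A →ₐ[K] B} (hπ : Function.Surjective π)
    {b : B} (hb : b ∈ Subalgebra.center K B) : ∃ a ∈ Subalgebra.center K A, π a = b := by
  let ψ := (π : A →ₗ⁅K⁆ B).comp φ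
  let : LieRingModule L A := LieRingModule.compLieHom A φ
  have : LieModule K L A := LieModule.compLieHom A φ
  let : LieRingModule L B := LieRingModule.compLieHom B ψ
  have : LieModule K L B := LieModule.compLieHom B ψ
  let N : LieSubmodule K L A :=
    { LinearMap.range (φ : L →ₗ[K] A) with
      lie_mem := by
        rintro x _ ⟨y, rfl⟩
        exact ⟨⁅x, y⁆, φ.map_lie x y⟩ }
  have hfin : Module.Finite K N :=
    inferInstanceAs (Module.Finite K (LinearMap.range (φ : L →ₗ[K] A)))
  have hder (x : L) (a c : A) : ⁅φ x, a * c⁆ = ⁅φ x, a⁆ * c + a * ⁅φ x, c⁆ := by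
    simp only [Ring.lie_def]
    noncomm_ring
  have hA : IsLocallyFiniteLieModule K L A :=
    isLocallyFiniteLieModule_of_adjoin_eq_top hder N hφ
  let f : A →ₗ⁅K,L⁆ B :=
    { π.toLinearMap with map_lie' := fun {x a} ↦ LieHom.map_lie π.toLieHom (φ x) a }
  have hbtriv : b ∈ maxTrivSubmodule K L B := fun x ↦
    sub_eq_zero.2 (Subalgebra.mem_center_iff.1 hb (ψ x))
  obtain ⟨a, ha⟩ := hA.surjective_maxTrivHom f hπ ⟨b, hbtriv⟩
  exact ⟨a, mem_center_of_forall_lie_eq_zero hφ a.2, congrArg Subtype.val ha⟩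

theorem maximal_two_sided_ideal_of_finite_codimension_general {φ : L →ₗ⁅K⁆ A}
    (hφ : Algebra.adjoin K (Set.range φ) = ⊤) (I : Ideal A)
    (hI : ∀ a ∈ I, ∀ r : A, a * r ∈ I) (hfd : FiniteDimensional K (A ⧸ I.restrictScalars K))
    (hprime : (I.comap (Subalgebra.center K A).val).IsPrime) (J : Ideal A)
    (hJ : ∀ a ∈ J, ∀ r : A, a * r ∈ J) (hIJ : I < J) : J = ⊤ := by
  have : I.IsTwoSided := ⟨fun r ha ↦ hI _ ha r⟩
  have : J.IsTwoSided := ⟨fun r ha ↦ hJ _ ha r⟩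
  have : FiniteDimensional K (A ⧸ I) :=
    Module.Finite.equiv (Submodule.Quotient.restrictScalarsEquiv K I)
  have hπ := Ideal.Quotient.mkₐ_surjective K I
  have : IsSemisimpleRing (A ⧸ I) :=
    isSemisimpleModule_of_adjoin_range_eq_top (adjoin_range_comp_eq_top hφ hπ)
  exact eq_top_of_lt_of_isPrime_comap_center I J
    (fun _ hb ↦ exists_mem_center_apply_eq hφ hπ hb) hprime hIJ

end GeneratedAlgebra

/-- Let `L` be a finite-dimensional semisimple complex Lie algebra, `U(L)` its
universal enveloping algebra and `Z(U(L))` its center.  If `I` is a proper two-sided ideal of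
`U(L)` of finite codimension (the quotient `U(L)/I` is finite-dimensional over `ℂ`) such that
`I ∩ Z(U(L))` is a maximal ideal of `Z(U(L))`, then `I` is a maximal two-sided ideal of `U(L)`.
Here ideals are Mathlib left ideals together with the hypothesis that they are also closed under
right multiplication, and `I ∩ Z(U(L))` is the preimage of `I` under the inclusion of the
center. -/
theorem maximal_two_sided_ideal_of_finite_codimension
    (L : Type*) [LieRing L] [LieAlgebra ℂ L] [FiniteDimensional ℂ L]
    [LieAlgebra.IsSemisimple ℂ L]
    (I : Ideal (UniversalEnvelopingAlgebra ℂ L))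
    (hI2 : ∀ a ∈ I, ∀ r : UniversalEnvelopingAlgebra ℂ L, a * r ∈ I)
    (hne : I ≠ ⊤)
    (hfd : FiniteDimensional ℂ
      (UniversalEnvelopingAlgebra ℂ L ⧸ Submodule.restrictScalars ℂ I))
    (hmax : (I.comap (Subalgebra.center ℂ (UniversalEnvelopingAlgebra ℂ L)).val).IsMaximal) :
    ∀ J : Ideal (UniversalEnvelopingAlgebra ℂ L),
      (∀ a ∈ J, ∀ r : UniversalEnvelopingAlgebra ℂ L, a * r ∈ J) → I < J → J = ⊤ := by
  exact fun J hJ hIJ ↦ maximal_two_sided_ideal_of_finite_codimension_general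
    adjoin_range_ι_eq_top I hI2 hfd hmax.isPrime J hJ hIJ
end

section
/- Let F be a field of characteristic zero and k ≥ 2. For every n ≥ 1, the n-th differential codimension of M_k(F) under the action of the Lie algebra of all its derivations equals c_n^L(M_k(F)) = k^{2(n+1)} − (k² − 1)(n + 1). Concretely: the dimension of the F-subspace of multilinear maps M_k(F)^n → M_k(F) spanned by the maps (x_1, …, x_n) ↦ u_1(x_{σ(1)})·u_2(x_{σ(2)})⋯u_n(x_{σ(n)}), over all permutations σ ∈ S_n and all u_1, …, u_n ∈ U, equals k^{2(n+1)} − (k² − 1)(n + 1). -/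
/-- `U`: the unital subalgebra of `End_F(M_k(F))` generated by the inner derivations
`ad_a = L_a − R_a`, `a ∈ M_k(F)`. -/
noncomputable def innerDerivationsAlgebra (F : Type*) [Field F] (k : ℕ) :
    Subalgebra F (Module.End F (Matrix (Fin k) (Fin k) F)) :=
  Algebra.adjoin F (Set.range fun a : Matrix (Fin k) (Fin k) F =>
    LinearMap.mulLeft F a - LinearMap.mulRight F a)

/-- The space of multilinear maps `M_k(F)^n → M_k(F)` spanned by the maps
`(x_1, …, x_n) ↦ u_1(x_{σ(1)})·u_2(x_{σ(2)})⋯u_n(x_{σ(n)})` over all permutations `σ ∈ S_n`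
and all `u_1, …, u_n ∈ U`; its dimension is the `n`-th differential codimension
`c_n^L(M_k(F))`. -/
noncomputable def diffMultilinearSpan (F : Type*) [Field F] (k n : ℕ) :
    Submodule F (MultilinearMap F (fun _ : Fin n => Matrix (Fin k) (Fin k) F)
      (Matrix (Fin k) (Fin k) F)) :=
  Submodule.span F
    {g | ∃ (σ : Equiv.Perm (Fin n)) (u : Fin n → innerDerivationsAlgebra F k),
        g = MultilinearMap.domDomCongr σ
          ((MultilinearMap.mkPiAlgebraFin F n (Matrix (Fin k) (Fin k) F)).compLinearMap
            fun i => (u i : Module.End F (Matrix (Fin k) (Fin k) F)))}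

/-!
Let `τ` be the trace of `M_k(F)` divided by `k`, so that `M_k(F) = F · 1 ⊕ ker τ`. The algebra `U`
consists of all operators preserving this decomposition. Casimir sums `∑ ad (a E_ij) ∘ ad (E_ji)`
show that `U` contains the compressions `q L_a q` of left multiplications to `ker τ`, where `q` is
the projection onto `ker τ` along the scalars; the failure of `a ↦ q L_a q` to be multiplicative
has rank one, and these defects span all operators on `ker τ` extended by zero to the scalars.

A multilinear map `f` is then a combination of products of elements of `U` if and only if `f x`
lies in `(ker τ) ^ #T` whenever the arguments are traceless at the places in `T` and equal to `1`
elsewhere. Since `(ker τ) ^ 2 = M_k(F)`, only the sets `T` with at most one element impose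
conditions, and these are `(k² - 1) + n (k² - 1)` independent linear equations.
-/

namespace DifferentialCodimension

section SplitEnd

variable {R A : Type*} [CommRing R] [Ring A] [Algebra R A]

/-- The operator `x ↦ τ(x) · 1`, which for `τ 1 = 1` is the projection onto the scalars
along `ker τ`. -/
def scalarProj (τ : A →ₗ[R] R) : Module.End R A := τ.smulRight 1

/-- The operator `x ↦ x - τ(x) · 1`, which for `τ 1 = 1` is the projection onto `ker τ`
along the scalars. -/
def kerProj (τ : A →ₗ[R] R) : Module.End R A := 1 - scalarProj τ

/-- The endomorphisms commuting with `scalarProj τ`; for `τ 1 = 1` these are the endomorphisms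
preserving the decomposition `A = R · 1 ⊕ ker τ`. -/
def splitEnd (τ : A →ₗ[R] R) : Subalgebra R (Module.End R A) :=
  Subalgebra.centralizer R {scalarProj τ}

/-- The compression `q ∘ L_a ∘ q` of the left multiplication by `a`, where `q = kerProj τ`. -/
def compressedMulLeft (τ : A →ₗ[R] R) (a : A) : Module.End R A :=
  kerProj τ * LinearMap.mulLeft R a * kerProj τ

variable {τ : A →ₗ[R] R}

theorem scalarProj_apply (x : A) : scalarProj τ x = τ x • 1 := by
  simp [scalarProj]

theorem kerProj_apply (x : A) : kerProj τ x = x - τ x • 1 := by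
  simp [kerProj, scalarProj_apply]

theorem kerProj_of_mem {x : A} (hx : x ∈ LinearMap.ker τ) : kerProj τ x = x := by
  rw [kerProj_apply, LinearMap.mem_ker.1 hx, zero_smul, sub_zero]

theorem kerProj_mem (hτ : τ 1 = 1) (x : A) : kerProj τ x ∈ LinearMap.ker τ := by
  simp [kerProj_apply, hτ]

theorem kerProj_kerProj (hτ : τ 1 = 1) (x : A) : kerProj τ (kerProj τ x) = kerProj τ x :=
  kerProj_of_mem (kerProj_mem hτ x)

theorem compressedMulLeft_apply (a x : A) :
    compressedMulLeft τ a x = kerProj τ (a * kerProj τ x) :=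
  rfl

theorem compressedMulLeft_mul_sub (hτ : τ 1 = 1) (a b : A) :
    compressedMulLeft τ (a * b) - compressedMulLeft τ a * compressedMulLeft τ b =
      (τ ∘ₗ LinearMap.mulLeft R b ∘ₗ kerProj τ).smulRight (kerProj τ a) := by
  ext x
  simp only [LinearMap.sub_apply, Module.End.mul_apply, compressedMulLeft_apply,
    kerProj_kerProj hτ, LinearMap.smulRight_apply, LinearMap.comp_apply, LinearMap.mulLeft_apply]
  rw [kerProj_apply (b * _), mul_sub, map_sub, mul_smul_comm, mul_one, map_smul, mul_assoc,
    sub_sub_cancel]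

theorem mem_splitEnd_iff {u : Module.End R A} :
    u ∈ splitEnd τ ↔ ∀ x, τ (u x) • (1 : A) = τ x • u 1 := by
  rw [splitEnd, Subalgebra.mem_centralizer_iff]
  simp only [Set.mem_singleton_iff, forall_eq]
  simp only [LinearMap.ext_iff, Module.End.mul_apply, scalarProj_apply, map_smul]

theorem apply_one_mem_one_of_mem_splitEnd (hτ : τ 1 = 1) {u : Module.End R A}
    (hu : u ∈ splitEnd τ) : u 1 ∈ (1 : Submodule R A) := by
  have h := mem_splitEnd_iff.1 hu 1
  rw [hτ, one_smul] at h
  exact h ▸ Submodule.smul_mem _ _ (Submodule.one_le.1 le_rfl)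

theorem apply_mem_ker_of_mem_splitEnd (hτ : τ 1 = 1) {u : Module.End R A}
    (hu : u ∈ splitEnd τ) {x : A} (hx : x ∈ LinearMap.ker τ) : u x ∈ LinearMap.ker τ := by
  have h := congrArg τ (mem_splitEnd_iff.1 hu x)
  simpa [hτ, LinearMap.mem_ker.1 hx] using h

theorem smulRight_mem_splitEnd_of_mem_one (hτ : τ 1 = 1) {a : A}
    (ha : a ∈ (1 : Submodule R A)) : τ.smulRight a ∈ splitEnd τ := by
  obtain ⟨c, rfl⟩ := Submodule.mem_one.1 ha
  simp [mem_splitEnd_iff, Algebra.algebraMap_eq_smul_one, hτ, smul_smul]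

theorem smulRight_mem_splitEnd_of_mem_ker {φ : A →ₗ[R] R} (hφ : φ 1 = 0) {a : A}
    (ha : a ∈ LinearMap.ker τ) : φ.smulRight a ∈ splitEnd τ := by
  simp [mem_splitEnd_iff, hφ, LinearMap.mem_ker.1 ha]

theorem eq_compression_add_smul_scalarProj {u : Module.End R A} (hτ : τ 1 = 1)
    (hu : u ∈ splitEnd τ) :
    u = kerProj τ * u * kerProj τ + τ (u 1) • scalarProj τ := by
  have hu1 : u 1 = τ (u 1) • 1 := by simpa [hτ] using (mem_splitEnd_iff.1 hu 1).symm
  ext x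
  have hker : u (kerProj τ x) ∈ LinearMap.ker τ :=
    apply_mem_ker_of_mem_splitEnd hτ hu (kerProj_mem hτ x)
  rw [LinearMap.add_apply, Module.End.mul_apply, Module.End.mul_apply, kerProj_of_mem hker,
    kerProj_apply, map_sub, map_smul, LinearMap.smul_apply, scalarProj_apply, smul_comm, ← hu1,
    sub_add_cancel]

end SplitEnd

section ListProd

open scoped Pointwise

theorem prod_ofFn_ite_mem {M : Type*} [Monoid M] (x : M) {n : ℕ} (T : Finset (Fin n)) :
    (List.ofFn fun i => if i ∈ T then x else 1).prod = x ^ T.card := by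
  -- The factors are powers of `x`, so the product can be computed in the commutative monoid `ℕ`.
  have h := congrArg (powersHom M x)
    (List.prod_ofFn (f := fun i => if i ∈ T then Multiplicative.ofAdd 1 else 1))
  rw [map_list_prod, List.map_ofFn] at h
  convert h using 2
  · simp [Function.comp_def, apply_ite (powersHom M x)]
  · simp [Finset.prod_ite_mem]

variable {R A : Type*} [CommSemiring R] [Semiring A] [Algebra R A]

theorem prod_map_span (l : List (Set A)) :
    (l.map (Submodule.span R)).prod = Submodule.span R l.prod := by
  induction l with
  | nil => simp [Submodule.one_eq_span_one_set]
  | cons s l ih => simp [ih, Submodule.span_mul_span]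

theorem prod_ofFn_eq_span {n : ℕ} (V : Fin n → Submodule R A) :
    (List.ofFn V).prod =
      Submodule.span R {m | ∃ a : Fin n → A, (∀ i, a i ∈ V i) ∧ (List.ofFn a).prod = m} := by
  have h := prod_map_span (R := R) (List.ofFn fun i => (V i : Set A))
  rw [List.map_ofFn] at h
  simp only [Function.comp_def, Submodule.span_eq] at h
  rw [h]
  congr 1
  ext m
  rw [Set.mem_prod_list_ofFn]
  exact ⟨fun ⟨a, ha⟩ => ⟨fun i => a i, fun i => (a i).2, ha⟩,
    fun ⟨a, ha, hm⟩ => ⟨fun i => ⟨a i, ha i⟩, hm⟩⟩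

theorem pow_eq_top_of_sq_eq_top {S : Submodule R A} (hS : S ^ 2 = ⊤) {m : ℕ} (hm : 2 ≤ m) :
    S ^ m = ⊤ := by
  induction m, hm using Nat.le_induction with
  | base => exact hS
  | succ m _ ih =>
    rw [pow_succ, ih]
    exact top_le_iff.1 (hS.ge.trans (by rw [sq]; exact mul_le_mul' le_top le_rfl))

end ListProd

section RankOne

variable {R A : Type*} [CommRing R] [Ring A] [Algebra R A] {n : ℕ}

/-- The multilinear map `x ↦ (∏ i, φ i (x i)) • m` attached to linear forms `φ i` and a
vector `m`, as a linear function of `m`. -/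
def rankOneMap (φ : Fin n → A →ₗ[R] R) :
    A →ₗ[R] MultilinearMap R (fun _ : Fin n => A) A where
  toFun m := ((MultilinearMap.mkPiAlgebra R (Fin n) R).compLinearMap φ).smulRight m
  map_add' m m' := by ext x; simp
  map_smul' c m := by ext x; simp [smul_comm c]

theorem rankOneMap_apply (φ : Fin n → A →ₗ[R] R) (m : A) (x : Fin n → A) :
    rankOneMap φ m x = (∏ i, φ i (x i)) • m := by
  simp [rankOneMap]

theorem sum_rankOneMap_coord {ι : Type*} [Fintype ι] (b : Module.Basis ι R A)
    (f : MultilinearMap R (fun _ : Fin n => A) A) :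
    ∑ r : Fin n → ι, rankOneMap (fun i => b.coord (r i)) (f fun i => b (r i)) = f := by
  classical
  refine Module.Basis.ext_multilinear (fun _ => b) fun s => ?_
  rw [sum_apply, Finset.sum_eq_single s]
  · simp [rankOneMap_apply]
  · intro r _ hrs
    obtain ⟨i, hi⟩ := Function.ne_iff.1 hrs
    rw [rankOneMap_apply, Finset.prod_eq_zero (Finset.mem_univ i), zero_smul]
    simp [Finsupp.single_eq_of_ne hi]
  · simp

theorem rankOneMap_update_apply_update {τ : A →ₗ[R] R} (hτ : τ 1 = 1) (φ : A →ₗ[R] R) (m : A)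
    (i : Fin n) (x : A) :
    rankOneMap (Function.update (fun _ => τ) i φ) m (Function.update 1 i x) = φ x • m := by
  rw [rankOneMap_apply, Finset.prod_eq_single i] <;> simp +contextual [hτ]

theorem rankOneMap_update_apply_eq_zero {τ φ : A →ₗ[R] R} (m : A) {i : Fin n} {x : Fin n → A}
    (hx : φ (x i) = 0) : rankOneMap (Function.update (fun _ => τ) i φ) m x = 0 := by
  rw [rankOneMap_apply, Finset.prod_eq_zero (Finset.mem_univ i) (by simpa using hx), zero_smul]

end RankOne

section ProductSpan

/-- The space of multilinear maps spanned by the maps `x ↦ u₁(x_{σ(1)}) ⋯ uₙ(x_{σ(n)})`, with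
`σ` a permutation and all `uᵢ` in a given algebra `U` of operators. -/
def productSpan {R A : Type*} [CommRing R] [Ring A] [Algebra R A]
    (U : Subalgebra R (Module.End R A)) (n : ℕ) :
    Submodule R (MultilinearMap R (fun _ : Fin n => A) A) :=
  Submodule.span R
    {g | ∃ (σ : Equiv.Perm (Fin n)) (u : Fin n → U),
        g = MultilinearMap.domDomCongr σ
          ((MultilinearMap.mkPiAlgebraFin R n A).compLinearMap
            fun i => (u i : Module.End R A))}

variable {R A : Type*} [CommRing R] [Ring A] [Algebra R A] {n : ℕ}

theorem rankOneMap_mem_productSpan {U : Subalgebra R (Module.End R A)} {φ : Fin n → A →ₗ[R] R}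
    {V : Fin n → Submodule R A} (hφ : ∀ i, ∀ a ∈ V i, (φ i).smulRight a ∈ U) {m : A}
    (hm : m ∈ (List.ofFn V).prod) : rankOneMap φ m ∈ productSpan U n := by
  rw [prod_ofFn_eq_span] at hm
  induction hm using Submodule.span_induction with
  | mem _ ha =>
    obtain ⟨a, ha, rfl⟩ := ha
    refine Submodule.subset_span ⟨1, fun i => ⟨_, hφ i (a i) (ha i)⟩, ?_⟩
    ext x
    have h := (MultilinearMap.mkPiAlgebraFin R n A).map_smul_univ (fun i => φ i (x i)) a
    simpa [rankOneMap_apply] using h.symm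
  | zero => rw [map_zero]; exact zero_mem _
  | add _ _ _ _ h h' => rw [map_add]; exact add_mem h h'
  | smul c _ _ h => rw [map_smul]; exact Submodule.smul_mem _ c h

theorem apply_mem_ker_pow_of_mem_productSpan {τ : A →ₗ[R] R} (hτ : τ 1 = 1)
    {f : MultilinearMap R (fun _ : Fin n => A) A} (hf : f ∈ productSpan (splitEnd τ) n)
    {T : Finset (Fin n)} {x : Fin n → A} (hxT : ∀ i ∈ T, x i ∈ LinearMap.ker τ)
    (hx : ∀ i ∉ T, x i = 1) : f x ∈ LinearMap.ker τ ^ T.card := by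
  induction hf using Submodule.span_induction with
  | mem _ hg =>
    obtain ⟨σ, u, rfl⟩ := hg
    rw [← Finset.card_map σ.symm.toEmbedding, ← prod_ofFn_ite_mem, prod_ofFn_eq_span]
    refine Submodule.subset_span ⟨fun i => (u i : Module.End R A) (x (σ i)), fun i => ?_, by simp⟩
    split_ifs with hi
    · exact apply_mem_ker_of_mem_splitEnd hτ (u i).2 (hxT _ (by simpa using hi))
    · have hσ : x (σ i) = 1 := hx _ (by simpa using hi)
      simpa only [hσ] using apply_one_mem_one_of_mem_splitEnd hτ (u i).2
  | zero => exact zero_mem _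
  | add _ _ _ _ h h' => exact add_mem h h'
  | smul c _ _ h => exact Submodule.smul_mem _ c h

end ProductSpan

section Codimension

variable {F A : Type*} [Field F] [Ring A] [Algebra F A] {n : ℕ} {τ : A →ₗ[F] F}

theorem exists_basis_cons_one [FiniteDimensional F A] (hτ : τ 1 = 1) :
    ∃ b : Module.Basis (Fin (Module.finrank F (LinearMap.ker τ) + 1)) F A,
      b 0 = 1 ∧ (∀ j, b (Fin.succ j) ∈ LinearMap.ker τ) ∧ b.coord 0 = τ := by
  let b : Module.Basis (Fin (Module.finrank F (LinearMap.ker τ) + 1)) F A :=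
    .mkFinCons 1 (Module.finBasis F (LinearMap.ker τ))
      (fun c x hx h => by simpa [hτ, LinearMap.mem_ker.1 hx] using congrArg τ h)
      (fun z => ⟨-τ z, by simp [hτ]⟩)
  have hb0 : b 0 = 1 := by simp [b]
  have hb (j) : b (Fin.succ j) ∈ LinearMap.ker τ := by simp [b]
  refine ⟨b, hb0, hb, b.ext (Fin.cases ?_ fun j => ?_)⟩
  · rw [Module.Basis.coord_apply, Module.Basis.repr_self, Finsupp.single_eq_same, hb0, hτ]
  · simp [LinearMap.mem_ker.1 (hb j)]

theorem mem_productSpan_splitEnd_iff [FiniteDimensional F A] (hτ : τ 1 = 1)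
    {f : MultilinearMap F (fun _ : Fin n => A) A} :
    f ∈ productSpan (splitEnd τ) n ↔ ∀ (T : Finset (Fin n)) (x : Fin n → A),
      (∀ i ∈ T, x i ∈ LinearMap.ker τ) → (∀ i ∉ T, x i = 1) → f x ∈ LinearMap.ker τ ^ T.card := by
  refine ⟨fun hf T x hxT hx => apply_mem_ker_pow_of_mem_productSpan hτ hf hxT hx, fun hf => ?_⟩
  obtain ⟨b, hb0, hb, hcoord⟩ := exists_basis_cons_one hτ
  rw [← sum_rankOneMap_coord b f]
  refine sum_mem fun r _ => ?_
  let T : Finset (Fin n) := {i | r i ≠ 0}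
  refine rankOneMap_mem_productSpan (V := fun i => if i ∈ T then LinearMap.ker τ else 1) ?_ ?_
  · intro i a ha
    by_cases hi : r i = 0
    · rw [hi, hcoord]
      exact smulRight_mem_splitEnd_of_mem_one hτ (by simpa [T, hi] using ha)
    · refine smulRight_mem_splitEnd_of_mem_ker ?_ (by simpa [T, hi] using ha)
      simp [← hb0, Finsupp.single_eq_of_ne hi]
  · rw [prod_ofFn_ite_mem]
    refine hf T _ (fun i hi => ?_) fun i hi => ?_
    · obtain ⟨j, hj⟩ := Fin.exists_succ_eq.2 (Finset.mem_filter.1 hi).2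
      exact hj ▸ hb j
    · rw [show r i = 0 by simpa [T] using hi, hb0]

theorem mem_productSpan_splitEnd_iff_of_sq_eq_top [FiniteDimensional F A] (hτ : τ 1 = 1)
    (hsq : LinearMap.ker τ ^ 2 = ⊤) {f : MultilinearMap F (fun _ : Fin n => A) A} :
    f ∈ productSpan (splitEnd τ) n ↔ f 1 ∈ (1 : Submodule F A) ∧
      ∀ i, ∀ x ∈ LinearMap.ker τ, f (Function.update 1 i x) ∈ LinearMap.ker τ := by
  rw [mem_productSpan_splitEnd_iff hτ]
  constructor
  · refine fun hf => ⟨by simpa using hf ∅ 1, fun i x hx => ?_⟩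
    simpa using hf {i} (Function.update 1 i x) (by simpa using hx) (by simp +contextual)
  · rintro ⟨hf1, hf⟩ T x hxT hx
    obtain hT | hT | hT : T.card = 0 ∨ T.card = 1 ∨ 2 ≤ T.card := by omega
    · obtain rfl := Finset.card_eq_zero.1 hT
      rwa [Finset.card_empty, pow_zero, show x = 1 from funext fun i => hx i (by simp)]
    · obtain ⟨i, rfl⟩ := Finset.card_eq_one.1 hT
      have hx' : x = Function.update (1 : Fin n → A) i (x i) :=
        Function.eq_update_iff.2 ⟨rfl, fun j hj => hx j (by simpa using hj)⟩
      rw [Finset.card_singleton, pow_one, hx']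
      exact hf i _ (hxT i (by simp))
    · rw [pow_eq_top_of_sq_eq_top hsq hT]
      trivial

/-- The obstruction for a multilinear map to lie in `productSpan (splitEnd τ) n`: the value at
`(1, …, 1)` modulo scalars, together with the linear forms `x ↦ τ (f (1, …, x, …, 1))`
on `ker τ`. -/
def obstruction (τ : A →ₗ[F] F) (n : ℕ) :
    MultilinearMap F (fun _ : Fin n => A) A →ₗ[F]
      (A ⧸ (1 : Submodule F A)) × (Fin n → Module.Dual F (LinearMap.ker τ)) where
  toFun f := (Submodule.Quotient.mk (f 1), fun i =>
    τ ∘ₗ f.toLinearMap 1 i ∘ₗ (LinearMap.ker τ).subtype)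
  map_add' f g := by ext <;> simp
  map_smul' c f := by ext <;> simp

theorem ker_obstruction [FiniteDimensional F A] (hτ : τ 1 = 1) (hsq : LinearMap.ker τ ^ 2 = ⊤) :
    LinearMap.ker (obstruction τ n) = productSpan (splitEnd τ) n := by
  ext f
  rw [mem_productSpan_splitEnd_iff_of_sq_eq_top hτ hsq]
  simp [obstruction, funext_iff, LinearMap.ext_iff]

theorem exists_dual_extend_of_ker (hτ : τ 1 = 1) (ψ : Module.Dual F (LinearMap.ker τ)) :
    ∃ φ : Module.Dual F A, φ 1 = 0 ∧ ∀ x : LinearMap.ker τ, φ x = ψ x := by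
  obtain ⟨g, hg⟩ := LinearMap.exists_extend ψ
  refine ⟨g - g 1 • τ, by simp [hτ], fun x => ?_⟩
  simpa [LinearMap.mem_ker.1 x.2] using LinearMap.congr_fun hg x

theorem obstruction_surjective (hτ : τ 1 = 1) :
    Function.Surjective (obstruction τ n) := by
  rintro ⟨s, ψ⟩
  obtain ⟨s, rfl⟩ := Submodule.Quotient.mk_surjective _ s
  choose φ hφ1 hφ using fun i => exists_dual_extend_of_ker hτ (ψ i)
  refine ⟨rankOneMap (fun _ => τ) s +
    ∑ i, rankOneMap (Function.update (fun _ => τ) i (φ i)) 1, Prod.ext ?_ ?_⟩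
  · have hone (i : Fin n) :
        rankOneMap (Function.update (fun _ => τ) i (φ i)) (1 : A) 1 = 0 :=
      rankOneMap_update_apply_eq_zero _ (hφ1 i)
    simp [obstruction, hone, rankOneMap_apply, hτ]
  · ext i x
    have hscalar : rankOneMap (fun _ => τ) s (Function.update 1 i (x : A)) = 0 := by
      simpa [LinearMap.mem_ker.1 x.2] using rankOneMap_update_apply_update hτ τ s i (x : A)
    have hoff (j : Fin n) (hj : j ≠ i) :
        rankOneMap (Function.update (fun _ => τ) j (φ j)) 1 (Function.update 1 i (x : A)) = 0 :=
      rankOneMap_update_apply_eq_zero _ (by simp [hj, hφ1])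
    simp [obstruction, hscalar, Finset.sum_eq_single i (fun j _ => hoff j),
      rankOneMap_update_apply_update hτ, hφ, hτ]

theorem finrank_multilinearMap [FiniteDimensional F A] :
    Module.finrank F (MultilinearMap F (fun _ : Fin n => A) A) =
      Module.finrank F A ^ (n + 1) := by
  let b := Module.finBasis F A
  rw [Module.finrank_eq_card_basis (Basis.multilinearMap (fun _ : Fin n => b) b)]
  simp [pow_succ]

theorem finrank_productSpan_splitEnd [FiniteDimensional F A] (hτ : τ 1 = 1)
    (hsq : LinearMap.ker τ ^ 2 = ⊤) :
    Module.finrank F (productSpan (splitEnd τ) n) =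
      Module.finrank F A ^ (n + 1) - (Module.finrank F A - 1) * (n + 1) := by
  have : Nontrivial A := ⟨1, 0, fun h => by simp [h] at hτ⟩
  have hker : Module.finrank F (LinearMap.ker τ) + 1 = Module.finrank F A :=
    Module.Dual.finrank_ker_add_one_of_ne_zero fun h => by simp [h] at hτ
  have hquot : Module.finrank F (A ⧸ (1 : Submodule F A)) + 1 = Module.finrank F A := by
    rw [← (1 : Submodule F A).finrank_quotient_add_finrank, Submodule.one_eq_span,
      finrank_span_singleton one_ne_zero]
  have hrank := (obstruction τ n).finrank_range_add_finrank_ker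
  rw [LinearMap.range_eq_top.2 (obstruction_surjective hτ), finrank_top,
    ker_obstruction hτ hsq, finrank_multilinearMap, Module.finrank_prod,
    Module.finrank_pi_fintype] at hrank
  simp only [Subspace.dual_finrank_eq, Finset.sum_const, Finset.card_univ, Fintype.card_fin,
    smul_eq_mul] at hrank
  rw [← hrank, ← hker, Nat.add_right_cancel (hquot.trans hker.symm), Nat.add_sub_cancel,
    mul_add_one, mul_comm n]
  omega

end Codimension

section Matrix

open Matrix

attribute [local instance] LieRing.ofAssociativeRing

section Single

variable {R n : Type*} [CommSemiring R] [Fintype n] [DecidableEq n]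

theorem sum_single_mul_single :
    ∑ i : n, ∑ j : n, single i j (1 : R) * single j i 1 = (Fintype.card n : R) • 1 := by
  simp only [single_mul_single_same, mul_one, Finset.sum_const, Finset.card_univ]
  rw [← Finset.smul_sum, sum_single_one, Nat.cast_smul_eq_nsmul]

theorem sum_single_mul_mul_single (x : Matrix n n R) :
    ∑ i : n, ∑ j : n, single i j 1 * x * single j i 1 = x.trace • 1 := by
  simp only [single_mul_mul_single, mul_one, one_mul]
  rw [trace, Finset.sum_smul, ← sum_single_one, Finset.sum_comm]
  simp [Finset.smul_sum, smul_single]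

theorem sum_trace_mul_single_smul_single (a : Matrix n n R) :
    ∑ i : n, ∑ j : n, (a * single i j 1).trace • single j i (1 : R) = a := by
  rw [Finset.sum_comm]
  simp [trace_mul_single, ← matrix_eq_sum_single]

end Single

theorem ker_trace_sq {R n : Type*} [CommRing R] [Fintype n] [DecidableEq n] [Nontrivial n] :
    LinearMap.ker (traceLinearMap n R R) ^ 2 = ⊤ := by
  have hoff {i j : n} (hij : i ≠ j) (c : R) : single i j c ∈ LinearMap.ker (traceLinearMap n R R) :=
    LinearMap.mem_ker.2 (trace_single_eq_of_ne _ _ _ hij)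
  refine eq_top_iff.2 fun x _ => ?_
  rw [matrix_eq_sum_single x, sq]
  refine sum_mem fun i _ => sum_mem fun j _ => ?_
  obtain rfl | hij := eq_or_ne i j
  · obtain ⟨l, hl⟩ := exists_ne i
    simpa using Submodule.mul_mem_mul (hoff hl.symm (x i i)) (hoff hl 1)
  · have hdiag : single i i (1 : R) - single j j 1 ∈ LinearMap.ker (traceLinearMap n R R) := by
      simp
    simpa [sub_mul, hij.symm] using Submodule.mul_mem_mul hdiag (hoff hij (x i j))

variable {F n : Type*} [Field F] [Fintype n]

/-- The trace of a matrix divided by its size, normalized so that the identity has value `1`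
whenever the size is invertible in `F`. -/
def normTrace (F n : Type*) [Field F] [Fintype n] : Matrix n n F →ₗ[F] F :=
  (Fintype.card n : F)⁻¹ • traceLinearMap n F F

theorem normTrace_apply (x : Matrix n n F) : normTrace F n x = (Fintype.card n : F)⁻¹ * x.trace :=
  rfl

theorem card_mul_normTrace (hn : (Fintype.card n : F) ≠ 0) (x : Matrix n n F) :
    (Fintype.card n : F) * normTrace F n x = x.trace :=
  mul_inv_cancel_left₀ hn _

theorem normTrace_mul_comm (x y : Matrix n n F) :
    normTrace F n (x * y) = normTrace F n (y * x) := by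
  rw [normTrace_apply, normTrace_apply, trace_mul_comm]

variable [DecidableEq n]

theorem normTrace_one (hn : (Fintype.card n : F) ≠ 0) : normTrace F n 1 = 1 := by
  rw [normTrace_apply, trace_one, inv_mul_cancel₀ hn]

theorem normTrace_lie (x y : Matrix n n F) : normTrace F n ⁅x, y⁆ = 0 := by
  rw [Ring.lie_def, map_sub, normTrace_mul_comm, sub_self]

theorem ker_normTrace_sq [Nontrivial n] (hn : (Fintype.card n : F) ≠ 0) :
    LinearMap.ker (normTrace F n) ^ 2 = ⊤ := by
  rw [normTrace, LinearMap.ker_smul _ _ (inv_ne_zero hn), ker_trace_sq]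

theorem ad_mem_splitEnd (a : Matrix n n F) :
    LieAlgebra.ad F (Matrix n n F) a ∈ splitEnd (normTrace F n) :=
  mem_splitEnd_iff.2 fun x => by
    rw [LieAlgebra.ad_apply, LieAlgebra.ad_apply, normTrace_lie, (Commute.one_right a).lie_eq,
      zero_smul, smul_zero]

theorem sum_ad_mul_ad (hn : (Fintype.card n : F) ≠ 0) (a : Matrix n n F) :
    ∑ i, ∑ j, LieAlgebra.ad F _ (a * single i j 1) * LieAlgebra.ad F _ (single j i 1) =
      (Fintype.card n : F) •
        (compressedMulLeft (normTrace F n) a + normTrace F n a • kerProj (normTrace F n)) := by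
  ext1 x
  have hexpand (i j : n) :
      ⁅a * single i j 1, ⁅single j i (1 : F), x⁆⁆ =
        a * (single i j 1 * single j i 1) * x - a * (single i j 1 * x * single j i 1)
          - (single j i 1 * (x * a) * single i j 1 - x * (single j i 1 * a * single i j 1)) := by
    simp only [Ring.lie_def]
    noncomm_ring
  calc _ = a * ((Fintype.card n : F) • 1) * x - a * (x.trace • 1)
        - ((x * a).trace • 1 - x * (a.trace • 1)) := by
        simp only [LinearMap.sum_apply, Module.End.mul_apply, LieAlgebra.ad_apply, hexpand,
          Finset.sum_sub_distrib, ← Finset.mul_sum, ← Finset.sum_mul, sum_single_mul_single,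
          sum_single_mul_mul_single]
        rw [Finset.sum_comm (f := fun i j => single j i 1 * (x * a) * single i j 1),
          Finset.sum_comm (f := fun i j => single j i 1 * a * single i j 1),
          sum_single_mul_mul_single, sum_single_mul_mul_single]
    _ = _ := by
        simp only [← card_mul_normTrace hn, normTrace_mul_comm x a, LinearMap.smul_apply,
          LinearMap.add_apply, compressedMulLeft_apply, kerProj_apply, mul_sub, map_sub, map_smul,
          mul_smul_comm, smul_mul_assoc, mul_one]
        module

-- Combined with `sum_ad_mul_ad`, this separates the two summands appearing there.
theorem sum_compressedMulLeft_mul_ad (hn : (Fintype.card n : F) ≠ 0) (a : Matrix n n F) :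
    ∑ i, ∑ j, (compressedMulLeft (normTrace F n) (a * single i j 1) +
        normTrace F n (a * single i j 1) • kerProj (normTrace F n)) *
          LieAlgebra.ad F _ (single j i 1) =
      (Fintype.card n : F) • compressedMulLeft (normTrace F n) a +
        (Fintype.card n : F)⁻¹ • LieAlgebra.ad F _ a := by
  set τ := normTrace F n with hτ
  ext1 x
  have hker (y : Matrix n n F) : kerProj τ ⁅y, x⁆ = ⁅y, x⁆ := kerProj_of_mem (normTrace_lie y x)
  have hleft : ∑ i, ∑ j, a * single i j 1 * ⁅single j i (1 : F), x⁆ =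
      (Fintype.card n : F) • (a * kerProj τ x) := by
    have hexpand (i j : n) : a * single i j 1 * ⁅single j i (1 : F), x⁆ =
        a * ((single i j 1 * single j i 1) * x - single i j 1 * x * single j i 1) := by
      simp only [Ring.lie_def]
      noncomm_ring
    simp only [hexpand, ← Finset.mul_sum, Finset.sum_sub_distrib, ← Finset.sum_mul,
      sum_single_mul_single, sum_single_mul_mul_single]
    rw [kerProj_apply, ← card_mul_normTrace hn, mul_smul, smul_mul_assoc, one_mul, ← smul_sub,
      mul_smul_comm]
  have hright : ∑ i, ∑ j, τ (a * single i j 1) • ⁅single j i (1 : F), x⁆ =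
      (Fintype.card n : F)⁻¹ • ⁅a, x⁆ := by
    conv_rhs => rw [← sum_trace_mul_single_smul_single a]
    simp only [hτ, normTrace_apply, mul_smul, ← Finset.smul_sum, sum_lie, smul_lie]
  simp only [LinearMap.sum_apply, Module.End.mul_apply, LinearMap.add_apply, LinearMap.smul_apply,
    LieAlgebra.ad_apply, compressedMulLeft_apply, hker, Finset.sum_add_distrib, ← map_sum, hleft,
    hright, map_smul]

section AdStable

variable {V : Subalgebra F (Module.End F (Matrix n n F))}

theorem compressedMulLeft_mem_of_ad_mem (hn : (Fintype.card n : F) ≠ 0)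
    (hV : ∀ a, LieAlgebra.ad F (Matrix n n F) a ∈ V) (a : Matrix n n F) :
    compressedMulLeft (normTrace F n) a ∈ V := by
  have hquadratic (b : Matrix n n F) :
      compressedMulLeft (normTrace F n) b + normTrace F n b • kerProj (normTrace F n) ∈ V := by
    rw [← inv_smul_smul₀ hn (_ + _), ← sum_ad_mul_ad hn]
    exact V.smul_mem (sum_mem fun i _ => sum_mem fun j _ => mul_mem (hV _) (hV _)) _
  rw [← inv_smul_smul₀ hn (compressedMulLeft _ a),
    eq_sub_of_add_eq (sum_compressedMulLeft_mul_ad hn a).symm]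
  exact V.smul_mem (sub_mem (sum_mem fun i _ => sum_mem fun j _ => mul_mem (hquadratic _) (hV _))
    (V.smul_mem (hV a) _)) _

theorem kerProj_mul_mul_kerProj_eq_sum (hn : (Fintype.card n : F) ≠ 0)
    (u : Module.End F (Matrix n n F)) :
    kerProj (normTrace F n) * u * kerProj (normTrace F n) =
      (Fintype.card n : F) • ∑ i, ∑ j,
        (normTrace F n ∘ₗ LinearMap.mulLeft F (single j i 1) ∘ₗ kerProj (normTrace F n)).smulRight
          (kerProj (normTrace F n) (u (single i j 1))) := by
  ext1 x
  simp only [Module.End.mul_apply]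
  conv_lhs => rw [matrix_eq_sum_single (kerProj (normTrace F n) x)]
  simp only [map_sum, LinearMap.smul_apply, LinearMap.sum_apply, LinearMap.smulRight_apply,
    LinearMap.comp_apply, LinearMap.mulLeft_apply, Finset.smul_sum,
    card_mul_normTrace hn, trace_single_mul, ← map_smul, smul_single, smul_eq_mul, mul_one, one_mul]

theorem splitEnd_le_of_ad_mem (hn : (Fintype.card n : F) ≠ 0)
    (hV : ∀ a, LieAlgebra.ad F (Matrix n n F) a ∈ V) : splitEnd (normTrace F n) ≤ V := by
  have hτ := normTrace_one (F := F) hn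
  have hcompression (u) : kerProj (normTrace F n) * u * kerProj (normTrace F n) ∈ V := by
    rw [kerProj_mul_mul_kerProj_eq_sum hn]
    refine V.smul_mem (sum_mem fun i _ => sum_mem fun j _ => ?_) _
    rw [← compressedMulLeft_mul_sub hτ]
    exact sub_mem (compressedMulLeft_mem_of_ad_mem hn hV _)
      (mul_mem (compressedMulLeft_mem_of_ad_mem hn hV _) (compressedMulLeft_mem_of_ad_mem hn hV _))
  have hkerProj : kerProj (normTrace F n) ∈ V := by
    have hidem : kerProj (normTrace F n) * 1 * kerProj (normTrace F n) = kerProj (normTrace F n) :=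
      LinearMap.ext fun x => kerProj_kerProj hτ x
    exact hidem ▸ hcompression 1
  have hscalarProj : scalarProj (normTrace F n) ∈ V := by
    rw [← sub_sub_cancel 1 (scalarProj _)]
    exact sub_mem (one_mem V) hkerProj
  intro u hu
  rw [eq_compression_add_smul_scalarProj hτ hu]
  exact add_mem (hcompression u) (V.smul_mem hscalarProj _)

end AdStable

theorem innerDerivationsAlgebra_eq_splitEnd {F : Type*} [Field F] {k : ℕ} (hk : (k : F) ≠ 0) :
    innerDerivationsAlgebra F k = splitEnd (normTrace F (Fin k)) := by
  have had (a : Matrix (Fin k) (Fin k) F) :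
      LieAlgebra.ad F _ a = LinearMap.mulLeft F a - LinearMap.mulRight F a :=
    congrFun (LieAlgebra.ad_eq_lmul_left_sub_lmul_right _) a
  refine le_antisymm (Algebra.adjoin_le ?_) (splitEnd_le_of_ad_mem (by simpa using hk) fun a => ?_)
  · exact Set.range_subset_iff.2 fun a => had a ▸ ad_mem_splitEnd a
  · exact had a ▸ Algebra.subset_adjoin ⟨a, rfl⟩

end Matrix

end DifferentialCodimension

open DifferentialCodimension in
theorem differential_codimension_of_matrix_algebra_general
    (F : Type*) [Field F] (k : ℕ) (hk : 2 ≤ k) (hkF : (k : F) ≠ 0) (n : ℕ) :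
    Module.finrank F (diffMultilinearSpan F k n)
      = k ^ (2 * (n + 1)) - (k ^ 2 - 1) * (n + 1) := by
  have : Nontrivial (Fin k) := Fin.nontrivial_iff_two_le.2 hk
  have hcard : (Fintype.card (Fin k) : F) ≠ 0 := by simpa using hkF
  have hspan : diffMultilinearSpan F k n = productSpan (splitEnd (normTrace F (Fin k))) n := by
    rw [← innerDerivationsAlgebra_eq_splitEnd hkF]
    rfl
  rw [hspan, finrank_productSpan_splitEnd (normTrace_one hcard) (ker_normTrace_sq hcard),
    Module.finrank_matrix, Module.finrank_self, Fintype.card_fin, mul_one, ← sq, ← pow_mul]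

/-- Let `F` be a field of characteristic zero and `k ≥ 2`.  For every
`n ≥ 1`, the `n`-th differential codimension of `M_k(F)` under the action of the Lie algebra
of all its derivations equals `k^{2(n+1)} − (k² − 1)(n + 1)`. -/
theorem differential_codimension_of_matrix_algebra
    (F : Type*) [Field F] [CharZero F] (k : ℕ) (hk : 2 ≤ k) (n : ℕ) (hn : 1 ≤ n) :
    Module.finrank F (diffMultilinearSpan F k n)
      = k ^ (2 * (n + 1)) - (k ^ 2 - 1) * (n + 1) :=
  differential_codimension_of_matrix_algebra_general F k hk (Nat.cast_ne_zero.2 (by omega)) n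
end

section
/- Let F be a field of characteristic zero and k ≥ 2. For all n ≥ 1 and 0 ≤ r ≤ n, the dimension of V_{r,n−r} equals 1 if r = n, equals k² − 1 if r = n − 1, and equals k² if 0 ≤ r ≤ n − 2. -/
/-- The linear map `M_k(F) → M_k(F)`, `x ↦ (tr(x)/k)·I_k`. -/
noncomputable def traceUnitLM (F : Type*) [Field F] (k : ℕ) :
    Matrix (Fin k) (Fin k) F →ₗ[F] Matrix (Fin k) (Fin k) F :=
  LinearMap.smulRight (Matrix.traceLinearMap (Fin k) F F)
    ((k : F)⁻¹ • (1 : Matrix (Fin k) (Fin k) F))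

/-- The linear map `M_k(F) → M_k(F)`, `x ↦ x_{12}·b` ((1,2) entry of `x` times `b`). -/
noncomputable def entry12LM (F : Type*) [Field F] (k : ℕ) (hk : 2 ≤ k)
    (b : Matrix (Fin k) (Fin k) F) :
    Matrix (Fin k) (Fin k) F →ₗ[F] Matrix (Fin k) (Fin k) F :=
  LinearMap.smulRight
    { toFun := fun x => x ⟨0, by omega⟩ ⟨1, by omega⟩
      map_add' := fun x y => rfl
      map_smul' := fun c x => rfl } b

/-- The space `V_{r,n−r}`: the subspace of multilinear maps `M_k(F)^n → M_k(F)` spanned by the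
maps `(x_1, …, x_n) ↦ v_1·v_2⋯v_n` where, for some `σ ∈ S_n` and traceless matrices
`b_1, …, b_n ∈ sl_k(F)`, the `l`-th factor is `v_l = (tr(x_{σ(l)})/k)·I_k` if `σ(l) ≤ r`
(0-indexed: `σ(l) < r`) and `v_l = (x_{σ(l)})_{12}·b_l` otherwise. -/
noncomputable def Vspace (F : Type*) [Field F] (k : ℕ) (hk : 2 ≤ k) (n r : ℕ) :
    Submodule F (MultilinearMap F (fun _ : Fin n => Matrix (Fin k) (Fin k) F)
      (Matrix (Fin k) (Fin k) F)) :=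
  Submodule.span F
    {g | ∃ (σ : Equiv.Perm (Fin n)) (b : Fin n → Matrix (Fin k) (Fin k) F),
        (∀ l, (b l).trace = 0) ∧
        g = MultilinearMap.domDomCongr σ
          ((MultilinearMap.mkPiAlgebraFin F n (Matrix (Fin k) (Fin k) F)).compLinearMap
            fun l => if ((σ l : ℕ) < r) then traceUnitLM F k else entry12LM F k hk (b l))}

/-!
A factor `(tr(x)/k)·I` or `x₁₂·b` is a linear functional of `x` times a fixed matrix, and which
functional is applied to `x_i` does not depend on the permutation. So every generator of `V_{r,n−r}`
is the product of these `n` functionals times a product of `r` identities and `n - r` traceless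
matrices, and `V_{r,n−r} ≅ sl_k ^ (n - r)`, a power of a subspace of the algebra `M_k(F)`. Here
`sl_k ^ 0 = F·I`, and `sl_k ^ m = M_k(F)` for `m ≥ 2` because `sl_k * sl_k` contains every matrix
unit.
-/

section Traceless

variable {ι R : Type*} [Fintype ι] [CommRing R]

/-- The space `sl` of traceless matrices. It is a plain submodule rather than the Lie subalgebra
`LieAlgebra.SpecialLinear.sl` because its powers are taken in the associative algebra of
matrices. -/
abbrev traceless (ι R : Type*) [Fintype ι] [CommRing R] : Submodule R (Matrix ι ι R) :=
  LinearMap.ker (Matrix.traceLinearMap ι R R)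

lemma finrank_traceless [IsDomain R] [Nonempty ι] :
    Module.finrank R (traceless ι R) = Fintype.card ι ^ 2 - 1 := by
  have finrank_quotient : Module.finrank R (Matrix ι ι R ⧸ traceless ι R) = 1 := by
    rw [((Matrix.traceLinearMap ι R R).quotKerEquivOfSurjective
      (Matrix.trace_surjective (n := ι))).finrank_eq, Module.finrank_self]
  have rank_nullity := (traceless ι R).finrank_quotient_add_finrank
  rw [finrank_quotient, Module.finrank_matrix, Module.finrank_self, mul_one, ← pow_two]
    at rank_nullity
  exact Nat.eq_sub_of_add_eq' rank_nullity

variable [DecidableEq ι]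

lemma single_mem_traceless {i j : ι} (hij : i ≠ j) (a : R) :
    Matrix.single i j a ∈ traceless ι R :=
  Matrix.trace_single_eq_of_ne i j a hij

lemma single_sub_single_mem_traceless (i j : ι) (a : R) :
    Matrix.single i i a - Matrix.single j j a ∈ traceless ι R := by
  simp

lemma single_mem_traceless_mul_traceless [Nontrivial ι] (i j : ι) (a : R) :
    Matrix.single i j a ∈ traceless ι R * traceless ι R := by
  rcases eq_or_ne i j with rfl | hij
  · obtain ⟨l, hl⟩ := exists_ne i
    rw [← one_mul a, ← Matrix.single_mul_single_same (1 : R) i l i]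
    exact Submodule.mul_mem_mul (single_mem_traceless hl.symm 1) (single_mem_traceless hl a)
  · have mul_single : (Matrix.single i i 1 - Matrix.single j j 1) * Matrix.single i j a =
        Matrix.single i j a := by
      simp [sub_mul, hij.symm]
    rw [← mul_single]
    exact Submodule.mul_mem_mul (single_sub_single_mem_traceless i j 1)
      (single_mem_traceless hij a)

lemma traceless_mul_traceless [Nontrivial ι] : traceless ι R * traceless ι R = ⊤ := by
  refine Submodule.eq_top_iff'.mpr fun M => ?_
  rw [Matrix.matrix_eq_sum_single M]
  exact sum_mem fun i _ => sum_mem fun j _ => single_mem_traceless_mul_traceless i j (M i j)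

lemma traceless_pow_eq_top [Nontrivial ι] {m : ℕ} (hm : 2 ≤ m) : traceless ι R ^ m = ⊤ := by
  induction m, hm using Nat.le_induction with
  | base => rw [pow_two, traceless_mul_traceless]
  | succ m _ ih =>
    refine top_le_iff.mp ?_
    calc (⊤ : Submodule R (Matrix ι ι R))
      _ = traceless ι R * traceless ι R := traceless_mul_traceless.symm
      _ ≤ ⊤ * traceless ι R := mul_le_mul' le_top le_rfl
      _ = traceless ι R ^ (m + 1) := by rw [pow_succ, ih]

end Traceless

section PaddedProducts

open scoped Pointwise

/-- The products of `n` factors of which the `r` factors in the positions that a permutation `σ`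
sends below `r` are `1` and the others lie in `S`. This is the matrix part of the generators of
`V_{r,n−r}`; the values of `b` at the padded positions are discarded, as in the definition of
`Vspace`. -/
def paddedProducts {A : Type*} [Monoid A] (S : Set A) (n r : ℕ) : Set A :=
  {c | ∃ (σ : Equiv.Perm (Fin n)) (b : Fin n → A), (∀ l, b l ∈ S) ∧
    (List.ofFn fun l => if (σ l : ℕ) < r then 1 else b l).prod = c}

variable {R A : Type*} [CommSemiring R] [Semiring A] [Algebra R A]

lemma sum_ite_perm_val_lt {n : ℕ} (σ : Equiv.Perm (Fin n)) (r : ℕ) :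
    ∑ l, (if (σ l : ℕ) < r then 0 else 1) = n - r := by
  have card_not_lt := Finset.card_filter_add_card_filter_not (s := Finset.univ)
    fun i : Fin n => (i : ℕ) < r
  rw [Fin.card_filter_val_lt, Finset.card_univ, Fintype.card_fin] at card_not_lt
  rw [Equiv.sum_comp σ fun i : Fin n => if (i : ℕ) < r then 0 else 1]
  simp only [Finset.sum_ite, Finset.sum_const_zero, Finset.sum_const, smul_eq_mul]
  omega

lemma paddedProducts_subset_pow (S : Submodule R A) (n r : ℕ) :
    paddedProducts (S : Set A) n r ⊆ (S ^ (n - r) : Submodule R A) := by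
  rintro _ ⟨σ, b, hb, rfl⟩
  have factor_mem : ∀ l,
      (if (σ l : ℕ) < r then 1 else b l) ∈ S ^ (if (σ l : ℕ) < r then 0 else 1) := by
    intro l
    split_ifs
    · simpa only [pow_zero] using Submodule.one_le.mp le_rfl
    · exact (pow_one S).symm ▸ hb l
  rw [← sum_ite_perm_val_lt σ r, ← List.sum_ofFn]
  exact SetLike.list_prod_ofFn_mem_graded _ _ factor_mem

lemma pow_subset_paddedProducts (S : Submodule R A) {n r : ℕ} (hr : r ≤ n) :
    (S : Set A) ^ (n - r) ⊆ paddedProducts (S : Set A) n r := by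
  obtain ⟨m, rfl⟩ := Nat.exists_eq_add_of_le hr
  rw [Nat.add_sub_cancel_left]
  intro c hc
  obtain ⟨f, rfl⟩ := Set.mem_pow.mp hc
  refine ⟨1, Fin.append (fun _ => 0) fun i => f i, Fin.addCases (by simp) (by simp), ?_⟩
  rw [List.ofFn_add]
  simp

lemma span_paddedProducts (S : Submodule R A) {n r : ℕ} (hr : r ≤ n) :
    Submodule.span R (paddedProducts (S : Set A) n r) = S ^ (n - r) := by
  refine le_antisymm (Submodule.span_le.mpr (paddedProducts_subset_pow S n r)) ?_
  rw [Submodule.pow_eq_span_pow_set]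
  exact Submodule.span_mono (pow_subset_paddedProducts S hr)

end PaddedProducts

section ProdSMul

variable {R ι N : Type*} {M : ι → Type*} [CommSemiring R] [Fintype ι]
  [∀ i, AddCommMonoid (M i)] [∀ i, Module R (M i)] [AddCommMonoid N] [Module R N]

/-- The linear map sending a vector `c` to the multilinear map `x ↦ (∏ i, φ i (x i)) • c`, for a
family `φ` of linear functionals. -/
noncomputable def prodSMul (φ : ∀ i, M i →ₗ[R] R) : N →ₗ[R] MultilinearMap R M N where
  toFun c := ((MultilinearMap.mkPiAlgebra R ι R).compLinearMap φ).smulRight c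
  map_add' c d := MultilinearMap.ext fun _ => smul_add _ c d
  map_smul' a c := MultilinearMap.ext fun _ => smul_comm _ a c

lemma prodSMul_apply (φ : ∀ i, M i →ₗ[R] R) (c : N) (x : ∀ i, M i) :
    prodSMul φ c x = (∏ i, φ i (x i)) • c :=
  rfl

lemma prodSMul_injective [IsDomain R] [Module.IsTorsionFree R N]
    {φ : ∀ i, M i →ₗ[R] R} (hφ : ∀ i, φ i ≠ 0) :
    Function.Injective (prodSMul φ : N →ₗ[R] MultilinearMap R M N) := by
  choose x hx using fun i => DFunLike.ne_iff.mp (hφ i)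
  intro c d hcd
  have hval : (∏ i, φ i (x i)) • c = (∏ i, φ i (x i)) • d := DFunLike.congr_fun hcd x
  exact smul_right_injective N (Finset.prod_ne_zero_iff.mpr fun i _ => hx i) hval

lemma domDomCongr_mkPiAlgebraFin_compLinearMap_smulRight {M A : Type*} [AddCommMonoid M]
    [Module R M] [Semiring A] [Algebra R A] {n : ℕ} (σ : Equiv.Perm (Fin n)) (φ : Fin n → M →ₗ[R] R)
    (b : Fin n → A) :
    ((MultilinearMap.mkPiAlgebraFin R n A).compLinearMap
      fun l => (φ (σ l)).smulRight (b l)).domDomCongr σ = prodSMul φ (List.ofFn b).prod := by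
  refine MultilinearMap.ext fun x => ?_
  rw [prodSMul_apply, ← Equiv.prod_comp σ, ← MultilinearMap.mkPiAlgebraFin_apply (R := R),
    ← MultilinearMap.map_smul_univ]
  rfl

end ProdSMul

section Vspace

variable {F : Type*} [Field F] {k : ℕ}

/-- The linear functional applied to the variable `x_{i+1}` in every generator of `V_{r,n−r}`: the
normalized trace for `i < r` and the (1,2) entry otherwise. -/
noncomputable def factorFunctional (F : Type*) [Field F] (k : ℕ) (hk : 2 ≤ k) (r i : ℕ) :
    Matrix (Fin k) (Fin k) F →ₗ[F] F :=
  if i < r then (k : F)⁻¹ • Matrix.traceLinearMap (Fin k) F F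
  else Matrix.entryLinearMap F F ⟨0, by omega⟩ ⟨1, by omega⟩

lemma factorFunctional_ne_zero (hk : 2 ≤ k) (hkF : (k : F) ≠ 0) (r i : ℕ) :
    factorFunctional F k hk r i ≠ 0 := by
  rw [factorFunctional]
  split_ifs
  · exact DFunLike.ne_iff.mpr ⟨1, by simp [hkF]⟩
  · exact DFunLike.ne_iff.mpr ⟨Matrix.single ⟨0, by omega⟩ ⟨1, by omega⟩ 1, by simp⟩

lemma ite_traceUnitLM_entry12LM_eq_smulRight (hk : 2 ≤ k) (r i : ℕ)
    (b : Matrix (Fin k) (Fin k) F) :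
    (if i < r then traceUnitLM F k else entry12LM F k hk b) =
      (factorFunctional F k hk r i).smulRight (if i < r then 1 else b) := by
  rw [factorFunctional]
  split_ifs
  · refine LinearMap.ext fun x => ?_
    simp [traceUnitLM, smul_smul, mul_comm]
  · rfl

lemma Vspace_eq_map_span_paddedProducts (hk : 2 ≤ k) (n r : ℕ) :
    Vspace F k hk n r =
      (Submodule.span F (paddedProducts (traceless (Fin k) F : Set _) n r)).map
        (prodSMul fun i : Fin n => factorFunctional F k hk r i) := by
  rw [Submodule.map_span, Vspace]
  congr 1
  ext g
  simp only [ite_traceUnitLM_entry12LM_eq_smulRight,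
    domDomCongr_mkPiAlgebraFin_compLinearMap_smulRight _
      fun i : Fin n => factorFunctional F k hk r i]
  constructor
  · rintro ⟨σ, b, hb, rfl⟩
    exact ⟨_, ⟨σ, b, hb, rfl⟩, rfl⟩
  · rintro ⟨_, ⟨σ, b, hb, rfl⟩, rfl⟩
    exact ⟨σ, b, hb, rfl⟩

lemma finrank_Vspace (hk : 2 ≤ k) (hkF : (k : F) ≠ 0) {n r : ℕ} (hr : r ≤ n) :
    Module.finrank F (Vspace F k hk n r) =
      Module.finrank F ↥(traceless (Fin k) F ^ (n - r)) := by
  have hinj := prodSMul_injective (N := Matrix (Fin k) (Fin k) F)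
    fun i : Fin n => factorFunctional_ne_zero hk hkF r i
  rw [Vspace_eq_map_span_paddedProducts, span_paddedProducts _ hr]
  exact (Submodule.equivMapOfInjective _ hinj _).finrank_eq.symm

end Vspace

theorem dim_Vspace_general (F : Type*) [Field F] (k : ℕ) (hk : 2 ≤ k) (hkF : (k : F) ≠ 0)
    (n r : ℕ) :
    (r = n → Module.finrank F (Vspace F k hk n r) = 1) ∧
    (r + 1 = n → Module.finrank F (Vspace F k hk n r) = k ^ 2 - 1) ∧
    (r + 2 ≤ n → Module.finrank F (Vspace F k hk n r) = k ^ 2) := by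
  have : Nontrivial (Fin k) := Fin.nontrivial_iff_two_le.mpr hk
  refine ⟨?_, ?_, fun hrn => ?_⟩
  · rintro rfl
    rw [finrank_Vspace hk hkF le_rfl, Nat.sub_self, pow_zero, Submodule.one_eq_span]
    exact finrank_span_singleton one_ne_zero
  · rintro rfl
    rw [finrank_Vspace hk hkF (Nat.le_add_right r 1), Nat.add_sub_cancel_left, pow_one,
      finrank_traceless, Fintype.card_fin]
  · rw [finrank_Vspace hk hkF (by omega), traceless_pow_eq_top (by omega), finrank_top]
    simp [Module.finrank_matrix, pow_two]

/-- Let `F` be a field of characteristic zero and `k ≥ 2`.  For all `n ≥ 1`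
and `0 ≤ r ≤ n`, the dimension of `V_{r,n−r}` equals `1` if `r = n`, equals `k² − 1` if
`r = n − 1`, and equals `k²` if `0 ≤ r ≤ n − 2`. -/
theorem dim_Vspace (F : Type*) [Field F] [CharZero F] (k : ℕ) (hk : 2 ≤ k)
    (n r : ℕ) (hn : 1 ≤ n) (hr : r ≤ n) :
    (r = n → Module.finrank F (Vspace F k hk n r) = 1) ∧
    (r + 1 = n → Module.finrank F (Vspace F k hk n r) = k ^ 2 - 1) ∧
    (r + 2 ≤ n → Module.finrank F (Vspace F k hk n r) = k ^ 2) := by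
  have hkF : (k : F) ≠ 0 := Nat.cast_ne_zero.mpr (by omega)
  exact dim_Vspace_general F k hk hkF n r
end
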